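/- Let m, n be natural numbers, z ∈ ℝᵐ, and let g : ℝᵐ → ℝⁿ be differentiable at z with Fréchet derivative J (identified with its n × m matrix in the standard bases) and Lipschitz on some neighbourhood of z. Let ε = (ε₁, …, ε_m) be a bounded random vector on a probability space (Ω, P) with E[ε_j ε_k] = 1 if j = k and E[ε_j ε_k] = 0 if j ≠ k. Then lim_{σ → 0⁺} σ⁻² · E[‖g(z + σε) − g(z)‖₂²] = ‖J‖_F², where ‖J‖_F² = Σ_{i,j} J_{ij}² is the squared Frobenius norm. -/

import Mathlib

open MeasureTheory Filter

open scoped Topology RealInnerProductSpace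

/-!
The difference quotients `σ⁻¹ (g (z + σ ε) - g z)` converge pointwise to `J ε`. Differentiability
at `z` also bounds them by a multiple of `‖ε‖` once `σ` is small, uniformly over the bounded
range of `ε`, so by dominated convergence the scaled expectations tend to `E ‖J ε‖²`. Expanding
this square and using `E[ε_j ε_k] = δ_{jk}` leaves the sum of the squared column norms of `J`.
-/

section DifferenceQuotient

theorem eventually_forall_mem_add_smul_of_isVonNBounded {𝕜 E : Type*} [NontriviallyNormedField 𝕜]
    [AddCommGroup E] [Module 𝕜 E] [TopologicalSpace E] [ContinuousAdd E] {p : E → Prop} {z : E}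
    {S : Set E} (hS : Bornology.IsVonNBounded 𝕜 S) (hp : ∀ᶠ x in 𝓝 z, p x) :
    ∀ᶠ σ : 𝕜 in 𝓝 0, ∀ v ∈ S, p (z + σ • v) := by
  have hp₀ : {v | p (z + v)} ∈ 𝓝 (0 : E) :=
    (continuous_const_add z).tendsto' 0 z (add_zero z) |>.eventually hp
  exact (hS hp₀).eventually_nhds_zero (mem_of_mem_nhds hp₀)

variable {𝕜 E F : Type*} [NontriviallyNormedField 𝕜]
  [NormedAddCommGroup E] [NormedSpace 𝕜 E] [NormedAddCommGroup F] [NormedSpace 𝕜 F]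
  {g : E → F} {J : E →L[𝕜] F} {z : E} {S : Set E}

theorem exists_eventually_norm_slope_le_of_hasFDerivAt (hg : HasFDerivAt g J z)
    (hS : Bornology.IsVonNBounded 𝕜 S) :
    ∃ K, ∀ᶠ σ : 𝕜 in 𝓝[≠] 0, ∀ v ∈ S, ‖σ⁻¹ • (g (z + σ • v) - g z)‖ ≤ K * ‖v‖ := by
  obtain ⟨K, hK⟩ := hg.isBigO_sub.bound
  refine ⟨K, ?_⟩
  filter_upwards [(eventually_forall_mem_add_smul_of_isVonNBounded hS hK).filter_mono
    nhdsWithin_le_nhds, self_mem_nhdsWithin] with σ hσ hσ₀ v hv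
  rw [norm_smul, norm_inv, inv_mul_le_iff₀ (norm_pos_iff.2 hσ₀)]
  calc ‖g (z + σ • v) - g z‖ ≤ K * ‖z + σ • v - z‖ := hσ v hv
    _ = ‖σ‖ * (K * ‖v‖) := by rw [add_sub_cancel_left, norm_smul, mul_left_comm]

variable {Ω : Type*} [MeasurableSpace Ω] {μ : Measure Ω}

theorem tendsto_integral_norm_slope_pow_of_hasFDerivAt {l : Filter 𝕜} [l.IsCountablyGenerated]
    (hl : l ≤ 𝓝[≠] 0) {X : Ω → E} {p : ℕ} (hg : HasFDerivAt g J z)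
    (hS : Bornology.IsVonNBounded 𝕜 S) (hXS : ∀ᵐ ω ∂μ, X ω ∈ S)
    (hX : Integrable (fun ω => ‖X ω‖ ^ p) μ)
    (hgX : ∀ᶠ σ in l, AEStronglyMeasurable (fun ω => g (z + σ • X ω)) μ) :
    Tendsto (fun σ => ∫ ω, ‖σ⁻¹ • (g (z + σ • X ω) - g z)‖ ^ p ∂μ) l
      (𝓝 (∫ ω, ‖J (X ω)‖ ^ p ∂μ)) := by
  obtain ⟨K, hK⟩ := exists_eventually_norm_slope_le_of_hasFDerivAt hg hS
  refine tendsto_integral_filter_of_dominated_convergence (fun ω => K ^ p * ‖X ω‖ ^ p)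
    ?measurable ?dominated (hX.const_mul _) ?pointwise
  case measurable =>
    filter_upwards [hgX] with σ hσ
    exact ((hσ.sub aestronglyMeasurable_const).const_smul σ⁻¹).norm.pow p
  case dominated =>
    filter_upwards [hK.filter_mono hl] with σ hσ
    filter_upwards [hXS] with ω hω
    rw [norm_pow, norm_norm, ← mul_pow]
    exact pow_le_pow_left₀ (norm_nonneg _) (hσ _ hω) p
  case pointwise =>
    exact ae_of_all _ fun ω =>
      (((hg.hasLineDerivAt (X ω)).tendsto_slope_zero.mono_left hl).norm).pow p

end DifferenceQuotient

section Measurability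

variable {Ω E Y : Type*} [MeasurableSpace Ω] {μ : Measure Ω} [MeasurableSpace E]
  [TopologicalSpace Y] [TopologicalSpace.PseudoMetrizableSpace Y]

theorem aestronglyMeasurable_comp_of_continuousOn [TopologicalSpace E] [OpensMeasurableSpace E]
    [SecondCountableTopologyEither E Y] {g : E → Y} {s : Set E} {X : Ω → E}
    (hg : ContinuousOn g s) (hs : MeasurableSet s) (hX : AEMeasurable X μ)
    (hXs : ∀ᵐ ω ∂μ, X ω ∈ s) : AEStronglyMeasurable (fun ω => g (X ω)) μ := by
  have hmap : (μ.map X).restrict s = μ.map X :=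
    Measure.restrict_eq_self_of_ae_mem ((ae_map_iff hX hs).2 hXs)
  exact (hmap ▸ hg.aestronglyMeasurable hs).comp_aemeasurable hX

theorem eventually_aestronglyMeasurable_comp_add_smul {𝕜 : Type*} [NontriviallyNormedField 𝕜]
    [TopologicalSpace E] [BorelSpace E] [AddCommGroup E] [Module 𝕜 E] [ContinuousAdd E]
    [ContinuousConstSMul 𝕜 E] [SecondCountableTopologyEither E Y]
    {g : E → Y} {z : E} {s S : Set E} {X : Ω → E}
    (hg : ContinuousOn g s) (hs : s ∈ 𝓝 z) (hX : AEMeasurable X μ)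
    (hS : Bornology.IsVonNBounded 𝕜 S) (hXS : ∀ᵐ ω ∂μ, X ω ∈ S) :
    ∀ᶠ σ : 𝕜 in 𝓝 0, AEStronglyMeasurable (fun ω => g (z + σ • X ω)) μ := by
  filter_upwards [eventually_forall_mem_add_smul_of_isVonNBounded hS (interior_mem_nhds.2 hs)]
    with σ hσ
  exact aestronglyMeasurable_comp_of_continuousOn (hg.mono interior_subset)
    isOpen_interior.measurableSet ((hX.const_smul σ).const_add z) (hXS.mono fun ω hω => hσ _ hω)

end Measurability

section SecondMoment

variable {Ω ι F : Type*} [MeasurableSpace Ω] {μ : Measure Ω} {ε : ι → Ω → ℝ}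
  [NormedAddCommGroup F] [InnerProductSpace ℝ F]

theorem integral_norm_sum_smul_sq [Fintype ι] (v : ι → F)
    (hε : ∀ j k, Integrable (fun ω => ε j ω * ε k ω) μ) :
    ∫ ω, ‖∑ j, ε j ω • v j‖ ^ 2 ∂μ = ∑ j, ∑ k, (∫ ω, ε j ω * ε k ω ∂μ) * ⟪v j, v k⟫ := by
  have expand (ω : Ω) : ‖∑ j, ε j ω • v j‖ ^ 2 = ∑ j, ∑ k, ε j ω * ε k ω * ⟪v j, v k⟫ := by
    rw [← real_inner_self_eq_norm_sq, sum_inner]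
    simp only [inner_sum, real_inner_smul_left, real_inner_smul_right, mul_assoc, mul_left_comm]
  have hint (j k : ι) : Integrable (fun ω => ε j ω * ε k ω * ⟪v j, v k⟫) μ :=
    (hε j k).mul_const _
  simp_rw [expand]
  rw [integral_finsetSum _ fun j _ => integrable_finsetSum _ fun k _ => hint j k]
  simp_rw [integral_finsetSum _ fun k _ => hint _ k, integral_mul_const]

theorem memLp_two_of_integral_mul_self_ne_zero {X : Ω → ℝ} (hX : AEStronglyMeasurable X μ)
    (h : ∫ ω, X ω * X ω ∂μ ≠ 0) : MemLp X 2 μ := by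
  rw [memLp_two_iff_integrable_sq hX]
  simpa only [sq] using Integrable.of_integral_ne_zero h

theorem integral_norm_map_sq_of_integral_mul_eq_ite [Fintype ι] [DecidableEq ι]
    (L : (ι → ℝ) →ₗ[ℝ] F) (hε : ∀ j, MemLp (ε j) 2 μ)
    (hcov : ∀ j k, ∫ ω, ε j ω * ε k ω ∂μ = if j = k then 1 else 0) :
    ∫ ω, ‖L (fun j => ε j ω)‖ ^ 2 ∂μ = ∑ j, ‖L (Pi.single j 1)‖ ^ 2 := by
  have columns (ω : Ω) : L (fun j => ε j ω) = ∑ j, ε j ω • L (Pi.single j 1) := by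
    conv_lhs => rw [pi_eq_sum_univ' (fun j => ε j ω)]
    simp only [map_sum, map_smul]
  simp_rw [columns]
  rw [integral_norm_sum_smul_sq _ fun j k => (hε j).integrable_mul (hε k)]
  simp only [hcov, ite_mul, one_mul, zero_mul, Finset.sum_ite_eq, Finset.mem_univ, if_true,
    real_inner_self_eq_norm_sq]

end SecondMoment

theorem isBounded_setOf_forall_abs_le {ι : Type*} (C : ℝ) :
    Bornology.IsBounded {v : ι → ℝ | ∀ j, |v j| ≤ C} :=
  (Bornology.IsBounded.pi fun _ => Metric.isBounded_Icc (-C) C).subset fun _ hv j _ =>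
    abs_le.1 (hv j)

theorem small_noise_limit_frobenius_general {Ω ι κ : Type*} [MeasurableSpace Ω] {μ : Measure Ω}
    [Fintype ι] [DecidableEq ι] [Fintype κ] {z : ι → ℝ} {g : (ι → ℝ) → κ → ℝ}
    {J : (ι → ℝ) →L[ℝ] κ → ℝ} {ε : ι → Ω → ℝ} {S : Set (ι → ℝ)}
    (hg : HasFDerivAt g J z) (hε : ∀ j, AEStronglyMeasurable (ε j) μ)
    (hS : Bornology.IsBounded S) (hεS : ∀ᵐ ω ∂μ, (fun j => ε j ω) ∈ S)
    (hgε : ∀ᶠ σ : ℝ in 𝓝[>] 0, AEStronglyMeasurable (fun ω => g (fun j => z j + σ * ε j ω)) μ)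
    (hcov : ∀ j k, ∫ ω, ε j ω * ε k ω ∂μ = if j = k then 1 else 0) :
    Tendsto (fun σ : ℝ => (σ ^ 2)⁻¹ * ∫ ω, ∑ i, (g (fun j => z j + σ * ε j ω) i - g z i) ^ 2 ∂μ)
      (𝓝[>] 0) (𝓝 (∑ i, ∑ j, (J (Pi.single j 1) i) ^ 2)) := by
  have hLp (j : ι) : MemLp (ε j) 2 μ :=
    memLp_two_of_integral_mul_self_ne_zero (hε j) (by simp [hcov])
  let e := (EuclideanSpace.equiv κ ℝ).symm
  have norm_sq_e (y : κ → ℝ) : ‖e y‖ ^ 2 = ∑ i, y i ^ 2 := EuclideanSpace.real_norm_sq_eq _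
  have hlim := tendsto_integral_norm_slope_pow_of_hasFDerivAt (p := 2) (nhdsGT_le_nhdsNE 0)
    (e.hasFDerivAt.comp z hg) (NormedSpace.isVonNBounded_of_isBounded ℝ hS) hεS
    ((MemLp.of_eval hLp).integrable_norm_pow two_ne_zero)
    (hgε.mono fun σ hσ => e.continuous.comp_aestronglyMeasurable hσ)
  have hfrob : ∫ ω, ‖e (J fun j => ε j ω)‖ ^ 2 ∂μ = ∑ i, ∑ j, (J (Pi.single j 1) i) ^ 2 := by
    calc ∫ ω, ‖e (J fun j => ε j ω)‖ ^ 2 ∂μ = ∑ j, ‖e (J (Pi.single j 1))‖ ^ 2 :=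
          integral_norm_map_sq_of_integral_mul_eq_ite (e.toLinearMap ∘ₗ J.toLinearMap) hLp hcov
      _ = ∑ j, ∑ i, (J (Pi.single j 1) i) ^ 2 := by simp only [norm_sq_e]
      _ = ∑ i, ∑ j, (J (Pi.single j 1) i) ^ 2 := Finset.sum_comm
  have hslope (σ : ℝ) (x : ι → ℝ) :
      ‖σ⁻¹ • (e (g x) - e (g z))‖ ^ 2 = (σ ^ 2)⁻¹ * ∑ i, (g x i - g z i) ^ 2 := by
    rw [← map_sub, norm_smul, mul_pow, norm_inv, inv_pow, Real.norm_eq_abs, sq_abs, norm_sq_e]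
    simp only [Pi.sub_apply]
  rw [← hfrob]
  refine hlim.congr fun σ => ?_
  rw [← integral_const_mul]
  exact integral_congr_ae (ae_of_all _ fun ω => hslope σ _)

/-- Asymptotic form of Proposition 1: if `g` is differentiable at `z` with derivative `J`
(identified with its matrix via `J_{ij} = (J e_j)_i`) and Lipschitz near `z`, and `ε` is a
bounded random vector with unit-variance uncorrelated components, then
`σ⁻² E[‖g(z + σε) − g(z)‖₂²] → ‖J‖_F²` as `σ → 0⁺`. -/
theorem small_noise_limit_frobenius
    {m n : ℕ} {Ω : Type*} [MeasurableSpace Ω] (P : Measure Ω) [IsProbabilityMeasure P]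
    (z : Fin m → ℝ) (g : (Fin m → ℝ) → (Fin n → ℝ))
    (J : (Fin m → ℝ) →L[ℝ] (Fin n → ℝ))
    (hderiv : HasFDerivAt g J z)
    (hlip : ∃ (K : NNReal) (s : Set (Fin m → ℝ)), s ∈ nhds z ∧ LipschitzOnWith K g s)
    (ε : Fin m → Ω → ℝ)
    (hmeas : ∀ j, Measurable (ε j))
    (hbdd : ∃ C : ℝ, ∀ j ω, |ε j ω| ≤ C)
    (hcov : ∀ j k, ∫ ω, ε j ω * ε k ω ∂P = if j = k then 1 else 0) :
    Tendsto
      (fun σ : ℝ =>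
        (σ ^ 2)⁻¹ * ∫ ω, ∑ i, (g (fun j => z j + σ * ε j ω) i - g z i) ^ 2 ∂P)
      (nhdsWithin 0 (Set.Ioi 0))
      (nhds (∑ i, ∑ j, (J (Pi.single j 1) i) ^ 2)) := by
  obtain ⟨K, s, hs, hK⟩ := hlip
  obtain ⟨C, hC⟩ := hbdd
  have hS := isBounded_setOf_forall_abs_le (ι := Fin m) C
  have hεS := ae_of_all P fun ω j => hC j ω
  have hgε := eventually_aestronglyMeasurable_comp_add_smul hK.continuousOn hs
    (measurable_pi_lambda _ hmeas).aemeasurable (NormedSpace.isVonNBounded_of_isBounded ℝ hS) hεS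
  exact small_noise_limit_frobenius_general hderiv (fun j => (hmeas j).aestronglyMeasurable) hS hεS
    (hgε.filter_mono nhdsWithin_le_nhds) hcov
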